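/- arXiv:2007.07088 — 2 statements merged into one kernel-verified Lean document; each statement's English description precedes it below -/
import Mathlib

section
/- Given a setting (N,M,q) with m ≥ 4 objects, for every ε > 0 there exist a bound r ∈ (0,1) and a mechanism φ such that φ is r-locally partially strategyproof but φ is not r^{2−ε}-partially strategyproof. -/
open Finset

/-- A preference order on `M` is a strict total order, represented as a ranking
bijection to `Fin m` (rank `0` is the most preferred object).
`P a < P b` means that `P` ranks `a` above `b`. -/
def Consistent {M : Type*} {m : ℕ} (u : M → ℝ) (P : M ≃ Fin m) : Prop :=
  ∀ a b : M, P a < P b → u b < u a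

/-- The minimal utility value `min_{j ∈ M} u(j)`. -/
noncomputable def minU {M : Type*} [Fintype M] [Nonempty M] (u : M → ℝ) : ℝ :=
  Finset.univ.inf' Finset.univ_nonempty u

/-- `u` satisfies uniformly relatively bounded indifference with respect to `r`. -/
def URBI {M : Type*} [Fintype M] [Nonempty M] (u : M → ℝ) (r : ℝ) : Prop :=
  ∀ a b : M, u b < u a → u b - minU u ≤ r * (u a - minU u)

/-- `P'` is in the neighborhood of `P`: it is obtained from `P` by swapping two
consecutively ranked objects. -/
def Nbhd {M : Type*} {m : ℕ} (P P' : M ≃ Fin m) : Prop :=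
  ∃ (k : ℕ) (h : k + 1 < m),
    P' = P.trans (Equiv.swap ⟨k, Nat.lt_of_succ_lt h⟩ ⟨k + 1, h⟩)

/-- A feasible random assignment mechanism for the setting `(N, M, q)`:
entries are nonnegative, each agent's row sums to one, and no object is
assigned beyond its capacity. -/
def Feasible {N M : Type*} [Fintype N] [Fintype M] {m : ℕ} (q : M → ℕ)
    (φ : (N → M ≃ Fin m) → N → M → ℝ) : Prop :=
  ∀ P : N → M ≃ Fin m,
    (∀ i j, 0 ≤ φ P i j) ∧ (∀ i, ∑ j, φ P i j = 1) ∧ (∀ j, ∑ i, φ P i j ≤ (q j : ℝ))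

/-- `φ` is `r`-partially strategyproof. -/
def PSP {N M : Type*} [DecidableEq N] [Fintype M] [Nonempty M] {m : ℕ}
    (φ : (N → M ≃ Fin m) → N → M → ℝ) (r : ℝ) : Prop :=
  ∀ (P : N → M ≃ Fin m) (i : N) (P' : M ≃ Fin m) (u : M → ℝ),
    (∀ j, 0 ≤ u j) → Consistent u (P i) → URBI u r →
    ∑ j, u j * φ (Function.update P i P') i j ≤ ∑ j, u j * φ P i j

/-- `φ` is `r`-locally partially strategyproof: the incentive constraint is only
required for misreports in the neighborhood of the truthful report. -/
def LocalPSP {N M : Type*} [DecidableEq N] [Fintype M] [Nonempty M] {m : ℕ}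
    (φ : (N → M ≃ Fin m) → N → M → ℝ) (r : ℝ) : Prop :=
  ∀ (P : N → M ≃ Fin m) (i : N) (P' : M ≃ Fin m), Nbhd (P i) P' →
    ∀ u : M → ℝ, (∀ j, 0 ≤ u j) → Consistent u (P i) → URBI u r →
    ∑ j, u j * φ (Function.update P i P') i j ≤ ∑ j, u j * φ P i j

open Filter Topology

/-!
Only one agent `i₀` matters: give `i₀` a lottery that depends on its first choice alone, and let the
others share what is left, without any influence of their own. A swap of neighbours then either
leaves the lottery unchanged or exchanges the first two choices.

Fix objects `a, b, c, d`. A first choice `t ≠ c` yields `t` or `d` with probability `1/2` each. The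
first choice `c` yields a lottery that, compared with the one for `a`, gives up a chance of `a` of
order `r ^ 2` and gains a chance `1/4` of `b`. A truthful first choice `a` with second choice `c`
has `b` in third place or lower, so under `URBI(r)` the object `b` is worth at most a fraction
`r ^ 2` of `a` and the deviation to `c` does not pay. A deviation to `c` from `a, b, c, d, …` is not
local; it pays as soon as `b` is worth `8 * r ^ 2` of `a`, and utilities that decrease geometrically
with ratio `8 * r ^ 2 ≤ r ^ (2 - ε)` allow this.
-/

section Utility

variable {M : Type*} {m : ℕ} {u : M → ℝ} {r s : ℝ}

lemma consistent_pow_rank (hs0 : 0 < s) (hs1 : s < 1) (P : M ≃ Fin m) :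
    Consistent (fun j => s ^ (P j : ℕ)) P := fun _ _ hab =>
  pow_lt_pow_right_of_lt_one₀ hs0 hs1 hab

variable [Fintype M] [Nonempty M]

lemma minU_le (u : M → ℝ) (j : M) : minU u ≤ u j :=
  inf'_le _ (mem_univ j)

lemma minU_nonneg (hu : ∀ j, 0 ≤ u j) : 0 ≤ minU u :=
  le_inf' _ _ fun j _ => hu j

lemma URBI.mono (h : URBI u r) (hrs : r ≤ s) : URBI u s := fun a b hab =>
  (h a b hab).trans (mul_le_mul_of_nonneg_right hrs (sub_nonneg.2 (minU_le u a)))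

lemma URBI.of_le_mul (hu : ∀ j, 0 ≤ u j) (hr : r ≤ 1)
    (h : ∀ a b, u b < u a → u b ≤ r * u a) : URBI u r := fun a b hab => by
  linarith [h a b hab, mul_le_of_le_one_left (minU_nonneg hu) hr]

lemma URBI.sub_minU_le_of_lt (h : URBI u r) {P : M ≃ Fin m} (hc : Consistent u P) {a b : M}
    (hab : P a < P b) : u b - minU u ≤ r * (u a - minU u) :=
  h a b (hc a b hab)

lemma URBI.sub_minU_le_sq_mul (h : URBI u r) (hr : 0 ≤ r) {P : M ≃ Fin m}
    (hc : Consistent u P) {a b c : M} (hab : P a < P b) (hbc : P b < P c) :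
    u c - minU u ≤ r ^ 2 * (u a - minU u) :=
  calc u c - minU u ≤ r * (u b - minU u) := h.sub_minU_le_of_lt hc hbc
    _ ≤ r * (r * (u a - minU u)) := by gcongr; exact h.sub_minU_le_of_lt hc hab
    _ = r ^ 2 * (u a - minU u) := by ring

lemma urbi_pow_rank (hs0 : 0 < s) (hs1 : s < 1) (P : M ≃ Fin m) :
    URBI (fun j => s ^ (P j : ℕ)) s := by
  refine .of_le_mul (fun j => by positivity) hs1.le fun a b hab => ?_
  have hrank : (P a : ℕ) < P b := (pow_lt_pow_iff_right_of_lt_one₀ hs0 hs1).1 hab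
  rw [← pow_succ']
  exact pow_le_pow_of_le_one hs0.le hs1.le hrank

end Utility

section Neighborhood

variable {M : Type*} {m : ℕ} [NeZero m]

lemma Nbhd.symm_zero_eq_or {P P' : M ≃ Fin m} (h : Nbhd P P') :
    P'.symm 0 = P.symm 0 ∨ (P (P'.symm 0) : ℕ) = 1 := by
  obtain ⟨k, hk, rfl⟩ := h
  rcases Nat.eq_zero_or_pos k with rfl | hpos
  · right
    simp
  · left
    simp [Equiv.swap_apply_def, Fin.ext_iff, hpos.ne]

lemma exists_symm_zero_eq (P : M ≃ Fin m) (t : M) : ∃ P' : M ≃ Fin m, P'.symm 0 = t :=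
  ⟨P.trans (Equiv.swap 0 (P t)), by simp⟩

end Neighborhood

section SoloMechanism

variable {N M : Type*} [DecidableEq N] [Fintype M] {m : ℕ}

/-- The mechanism that gives agent `i₀` the lottery `x P` if `i₀` reports `P`, and lets the other
agents share the remaining capacity, each in proportion to what is left of every object. -/
noncomputable def soloMechanism (q : M → ℕ) (i₀ : N) (x : (M ≃ Fin m) → M → ℝ) :
    (N → M ≃ Fin m) → N → M → ℝ := fun P i j =>
  if i = i₀ then x (P i₀) j else (q j - x (P i₀) j) / (∑ k, (q k : ℝ) - 1)

variable {q : M → ℕ} {i₀ : N} {x : (M ≃ Fin m) → M → ℝ} {r : ℝ}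

lemma soloMechanism_self (P : N → M ≃ Fin m) : soloMechanism q i₀ x P i₀ = x (P i₀) := by
  ext j
  simp [soloMechanism]

lemma soloMechanism_update_of_ne {i : N} (hi : i ≠ i₀) (P : N → M ≃ Fin m) (P' : M ≃ Fin m) :
    soloMechanism q i₀ x (Function.update P i P') = soloMechanism q i₀ x P := by
  ext
  simp [soloMechanism, Function.update_of_ne hi.symm]

lemma sum_soloMechanism_le [Fintype N] (P : N → M ≃ Fin m) (j : M) (hxq : x (P i₀) j ≤ q j)
    (hcap : Fintype.card N ≤ ∑ k, q k) (hq : 1 < ∑ k, q k) :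
    ∑ i, soloMechanism q i₀ x P i j ≤ q j := by
  have hQ : (0 : ℝ) < ∑ k, (q k : ℝ) - 1 := sub_pos.2 (mod_cast hq)
  have hcap' : (Fintype.card N : ℝ) - 1 ≤ ∑ k, (q k : ℝ) - 1 :=
    sub_le_sub_right (mod_cast hcap) 1
  have hothers : ∑ i ∈ univ.erase i₀, soloMechanism q i₀ x P i j
      = (Fintype.card N - 1) * ((q j - x (P i₀) j) / (∑ k, (q k : ℝ) - 1)) := by
    have : ((univ.erase i₀).card : ℝ) = Fintype.card N - 1 :=
      cast_card_erase_of_mem (mem_univ i₀)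
    rw [← this, ← nsmul_eq_mul, ← sum_const]
    exact sum_congr rfl fun i hi => if_neg (ne_of_mem_erase hi)
  rw [← add_sum_erase univ _ (mem_univ i₀), soloMechanism_self, hothers]
  calc x (P i₀) j + (Fintype.card N - 1) * ((q j - x (P i₀) j) / (∑ k, (q k : ℝ) - 1))
      ≤ x (P i₀) j
        + (∑ k, (q k : ℝ) - 1) * ((q j - x (P i₀) j) / (∑ k, (q k : ℝ) - 1)) := by
        gcongr
    _ = q j := by rw [mul_div_cancel₀ _ hQ.ne', add_sub_cancel]

lemma one_lt_sum_of_one_le [Nontrivial M] (hq : ∀ j, 1 ≤ q j) : 1 < ∑ j, q j :=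
  calc 1 < ∑ _j : M, 1 := by simpa using Fintype.one_lt_card (α := M)
    _ ≤ ∑ j, q j := sum_le_sum fun j _ => hq j

lemma feasible_soloMechanism [Fintype N] [Nontrivial M] (hx : ∀ P, x P ∈ stdSimplex ℝ M)
    (hq : ∀ j, 1 ≤ q j) (hcap : Fintype.card N ≤ ∑ k, q k) :
    Feasible q (soloMechanism q i₀ x : (N → M ≃ Fin m) → N → M → ℝ) := by
  have hsum : 1 < ∑ k, q k := one_lt_sum_of_one_le hq
  have hQ : (0 : ℝ) < ∑ k, (q k : ℝ) - 1 := sub_pos.2 (mod_cast hsum)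
  have hxq (P : M ≃ Fin m) (j : M) : x P j ≤ q j :=
    (mem_Icc_of_mem_stdSimplex (hx P) j).2.trans (mod_cast hq j)
  refine fun P => ⟨fun i j => ?_, fun i => ?_, fun j =>
    sum_soloMechanism_le P j (hxq _ j) hcap hsum⟩
  · unfold soloMechanism
    split_ifs
    · exact (hx _).1 j
    · exact div_nonneg (sub_nonneg.2 (hxq _ j)) hQ.le
  · unfold soloMechanism
    split_ifs
    · exact (hx _).2
    · rw [← sum_div, sum_sub_distrib, (hx _).2, div_self hQ.ne']

variable [Nonempty M]

lemma localPSP_soloMechanism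
    (h : ∀ P P', Nbhd P P' → ∀ u : M → ℝ, Consistent u P → URBI u r → u ⬝ᵥ x P' ≤ u ⬝ᵥ x P) :
    LocalPSP (soloMechanism q i₀ x) r := by
  intro P i P' hP u _ hc hu
  by_cases hi : i = i₀
  · subst hi
    simpa only [soloMechanism_self, Function.update_self, dotProduct] using h _ _ hP u hc hu
  · rw [soloMechanism_update_of_ne hi]

lemma PSP.dotProduct_le_of_soloMechanism (h : PSP (soloMechanism q i₀ x) r) (P P' : M ≃ Fin m)
    {u : M → ℝ} (hu : ∀ j, 0 ≤ u j) (hc : Consistent u P) (hr : URBI u r) :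
    u ⬝ᵥ x P' ≤ u ⬝ᵥ x P := by
  simpa only [soloMechanism_self, Function.update_self, dotProduct] using
    h (fun _ => P) i₀ P' u hu hc hr

end SoloMechanism

section TopLottery

variable {M : Type*} [DecidableEq M] {o : Fin 4 ↪ M} {r : ℝ} {t w : M} {u v : M → ℝ}

/-- The lottery offered to an agent who ranks `t` first, where the marked objects `a, b, c, d` are
`o 0, …, o 3`: an equal chance of `t` and `d`, except that ranking `c` first mostly buys chances of
`a` and `b`, at the expense of `c` and `d`. -/
noncomputable def topLottery (o : Fin 4 ↪ M) (r : ℝ) (t : M) : M → ℝ :=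
  if t = o 2 then
    Pi.single (o 0) ((1 - 3 * r ^ 2) / 2 : ℝ) + Pi.single (o 1) (1 / 4) + Pi.single (o 2) r
      + Pi.single (o 3) (1 / 4 - r + 3 * r ^ 2 / 2 : ℝ)
  else Pi.single t (1 / 2 : ℝ) + Pi.single (o 3) (1 / 2)

variable [Fintype M]

lemma dotProduct_topLottery_two (v : M → ℝ) :
    v ⬝ᵥ topLottery o r (o 2) = v (o 0) * ((1 - 3 * r ^ 2) / 2) + v (o 1) * (1 / 4)
      + v (o 2) * r + v (o 3) * (1 / 4 - r + 3 * r ^ 2 / 2) := by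
  simp only [topLottery, if_true, dotProduct_add, dotProduct_single]

lemma dotProduct_topLottery_of_ne (ht : t ≠ o 2) (v : M → ℝ) :
    v ⬝ᵥ topLottery o r t = v t * (1 / 2) + v (o 3) * (1 / 2) := by
  simp only [topLottery, if_neg ht, dotProduct_add, dotProduct_single]

lemma topLottery_mem_stdSimplex (hr0 : 0 ≤ r) (hr : r ≤ 1 / 4) (t : M) :
    topLottery o r t ∈ stdSimplex ℝ M := by
  constructor
  · change 0 ≤ topLottery o r t
    unfold topLottery
    split_ifs
    · have h0 : 0 ≤ (1 - 3 * r ^ 2) / 2 := by nlinarith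
      have h3 : 0 ≤ 1 / 4 - r + 3 * r ^ 2 / 2 := by nlinarith
      refine add_nonneg (add_nonneg (add_nonneg ?_ ?_) ?_) ?_ <;> rw [Pi.single_nonneg]
      exacts [h0, by norm_num, hr0, h3]
    · refine add_nonneg ?_ ?_ <;> rw [Pi.single_nonneg] <;> norm_num
  · rw [← one_dotProduct]
    by_cases ht : t = o 2
    · subst ht
      rw [dotProduct_topLottery_two]
      simp only [Pi.one_apply]
      ring
    · rw [dotProduct_topLottery_of_ne ht]
      norm_num

lemma dotProduct_topLottery_le_two (hr0 : 0 ≤ r) (hr : r ≤ 1 / 4) (hv : ∀ j, 0 ≤ v j)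
    (hw : w ≠ o 2) (h : ∀ j ≠ o 2, v j ≤ r * v (o 2)) :
    v ⬝ᵥ topLottery o r w ≤ v ⬝ᵥ topLottery o r (o 2) := by
  rw [dotProduct_topLottery_two, dotProduct_topLottery_of_ne hw]
  have h3 : v (o 3) ≤ r * v (o 2) := h _ (o.injective.ne (by decide))
  have h0 : 0 ≤ v (o 0) * (1 - 3 * r ^ 2) := mul_nonneg (hv _) (by nlinarith)
  have h3' : v (o 3) * (1 / 4 + r - 3 * r ^ 2 / 2) ≤ v (o 3) * (1 / 2) := by
    gcongr
    · exact hv _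
    · nlinarith
  linarith [h w hw, hv (o 1)]

lemma dotProduct_topLottery_two_le (hr0 : 0 ≤ r) (hr : r ≤ 1 / 4) (hv : ∀ j, 0 ≤ v j)
    (ht : t ≠ o 2) (h2 : v (o 2) ≤ r * v t) (h : ∀ j ≠ t, j ≠ o 2 → v j ≤ r ^ 2 * v t) :
    v ⬝ᵥ topLottery o r (o 2) ≤ v ⬝ᵥ topLottery o r t := by
  rw [dotProduct_topLottery_two, dotProduct_topLottery_of_ne ht]
  have hvt := hv t
  have hrv : 0 ≤ r * v t := mul_nonneg hr0 hvt
  have hrv4 : r * v t ≤ v t / 4 := by nlinarith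
  have hr2v : r ^ 2 * v t ≤ r * v t / 4 := by nlinarith
  have h2r : v (o 2) * r ≤ r ^ 2 * v t := by nlinarith
  have h3r : v (o 3) * (1 / 4 - r + 3 * r ^ 2 / 2) ≤ v (o 3) * (1 / 2) := by
    gcongr
    · exact hv _
    · nlinarith
  have h0r : v (o 0) * ((1 - 3 * r ^ 2) / 2) ≤ v (o 0) / 2 := by
    nlinarith [mul_nonneg (hv (o 0)) (sq_nonneg r)]
  by_cases ht0 : t = o 0
  -- The tight case: the loss of `3 * r ^ 2 / 2` in the chance of `o 0` has to outweigh the chance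
  -- `1 / 4` of `o 1`, worth at most `r ^ 2`, and the chance `r` of `o 2`, worth at most `r`.
  · subst ht0
    have h1 := h (o 1) (o.injective.ne (by decide)) (o.injective.ne (by decide))
    linarith
  have h0 := h (o 0) (Ne.symm ht0) (o.injective.ne (by decide))
  by_cases ht1 : t = o 1
  · subst ht1
    linarith
  · have h1 := h (o 1) (Ne.symm ht1) (o.injective.ne (by decide))
    linarith

lemma dotProduct_topLottery_le (hr0 : 0 ≤ r) (hr : r ≤ 1 / 4) (hv : ∀ j, 0 ≤ v j) (hwt : w ≠ t)
    (hw : v w ≤ r * v t) (h : ∀ j ≠ t, j ≠ w → v j ≤ r ^ 2 * v t) :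
    v ⬝ᵥ topLottery o r w ≤ v ⬝ᵥ topLottery o r t := by
  have hsq : r ^ 2 * v t ≤ r * v t :=
    mul_le_mul_of_nonneg_right (pow_le_of_le_one hr0 (by linarith) two_ne_zero) (hv t)
  by_cases ht : t = o 2
  · subst ht
    refine dotProduct_topLottery_le_two hr0 hr hv hwt fun j hj => ?_
    rcases eq_or_ne j w with rfl | hjw
    exacts [hw, (h j hj hjw).trans hsq]
  by_cases hw2 : w = o 2
  · subst hw2
    exact dotProduct_topLottery_two_le hr0 hr hv ht hw h
  · rw [dotProduct_topLottery_of_ne hw2, dotProduct_topLottery_of_ne ht]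
    nlinarith [hv t]

lemma dotProduct_topLottery_zero_lt_two (hr : 0 < r) (h3 : 0 < u (o 3))
    (h01 : 8 * r ^ 2 * u (o 0) ≤ u (o 1)) (h23 : u (o 3) ≤ u (o 2))
    (h03 : u (o 3) ≤ 2 * r ^ 2 * u (o 0)) :
    u ⬝ᵥ topLottery o r (o 0) < u ⬝ᵥ topLottery o r (o 2) := by
  rw [dotProduct_topLottery_two, dotProduct_topLottery_of_ne (o.injective.ne (by decide))]
  have h23r : u (o 3) * r ≤ u (o 2) * r := by gcongr
  have h3r : 0 < u (o 3) * r ^ 2 := by positivity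
  linarith

end TopLottery

section Incentives

variable {M : Type*} [Fintype M] {m : ℕ} [NeZero m] {P P' : M ≃ Fin m} {r : ℝ} {u : M → ℝ}

lemma sub_const_dotProduct_of_mem_stdSimplex {x : M → ℝ} (hx : x ∈ stdSimplex ℝ M) (u : M → ℝ)
    (c : ℝ) : (fun j => u j - c) ⬝ᵥ x = u ⬝ᵥ x - c := by
  simp only [dotProduct, sub_mul, sum_sub_distrib, ← mul_sum, hx.2, mul_one]

variable [Nonempty M]

lemma dotProduct_topLottery_symm_zero_le [DecidableEq M] (o : Fin 4 ↪ M) (hr0 : 0 ≤ r)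
    (hr : r ≤ 1 / 4) (hP : Nbhd P P') (hc : Consistent u P) (hu : URBI u r) :
    u ⬝ᵥ topLottery o r (P'.symm 0) ≤ u ⬝ᵥ topLottery o r (P.symm 0) := by
  rcases hP.symm_zero_eq_or with heq | hrank
  · rw [heq]
  set t := P.symm 0
  set w := P'.symm 0
  have ht : (P t : ℕ) = 0 := by simp [t]
  have htw : P t < P w := by omega
  have hwj (j : M) (hjt : j ≠ t) (hjw : j ≠ w) : P w < P j := by
    have := Fin.val_ne_of_ne (P.injective.ne hjt)
    have := Fin.val_ne_of_ne (P.injective.ne hjw)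
    omega
  have key := dotProduct_topLottery_le (o := o) (v := fun j => u j - minU u) hr0 hr
    (fun j => sub_nonneg.2 (minU_le u j)) (ne_of_apply_ne P htw.ne') (hu.sub_minU_le_of_lt hc htw)
    (fun j hjt hjw => hu.sub_minU_le_sq_mul hr0 hc htw (hwj j hjt hjw))
  simpa only [sub_const_dotProduct_of_mem_stdSimplex (topLottery_mem_stdSimplex hr0 hr _),
    sub_le_sub_iff_right] using key

end Incentives

lemma eventually_const_mul_rpow_le_rpow_sub {ε : ℝ} (hε : 0 < ε) (C p : ℝ) :
    ∀ᶠ r : ℝ in 𝓝[>] 0, C * r ^ p ≤ r ^ (p - ε) := by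
  have hlim : Tendsto (fun r : ℝ => C * r ^ ε) (𝓝[>] 0) (𝓝 0) := by
    have := ((Real.continuousAt_rpow_const 0 ε (Or.inr hε.le)).tendsto.const_mul C).mono_left
      (nhdsWithin_le_nhds (s := Set.Ioi 0))
    rwa [Real.zero_rpow hε.ne', mul_zero] at this
  filter_upwards [hlim.eventually_le_const one_pos, self_mem_nhdsWithin] with r hC hr
  have hr : 0 < r := hr
  rw [Real.rpow_sub hr, le_div_iff₀ (by positivity)]
  nlinarith [Real.rpow_pos_of_pos hr p]

section Tightness

variable {M : Type*} [Fintype M] [DecidableEq M] {m : ℕ} {P : M ≃ Fin m} {o : Fin 4 ↪ M} {r : ℝ}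

lemma dotProduct_topLottery_pow_rank_lt (ho : ∀ k, (P (o k) : ℕ) = k) (hr0 : 0 < r)
    (hr : r ≤ 1 / 4) :
    (fun j => (8 * r ^ 2) ^ (P j : ℕ)) ⬝ᵥ topLottery o r (o 0)
      < (fun j => (8 * r ^ 2) ^ (P j : ℕ)) ⬝ᵥ topLottery o r (o 2) := by
  have hs : 8 * r ^ 2 ≤ 1 / 2 := by nlinarith
  apply dotProduct_topLottery_zero_lt_two hr0 <;> simp only [ho]
  · positivity
  · norm_num
  · exact pow_le_pow_of_le_one (by positivity) (by linarith) (by decide)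
  · calc (8 * r ^ 2) ^ 3 = 8 * r ^ 2 * (8 * r ^ 2) ^ 2 := by ring
      _ ≤ 8 * r ^ 2 * (1 / 2) ^ 2 := by gcongr
      _ = 2 * r ^ 2 * (8 * r ^ 2) ^ 0 := by ring

lemma not_psp_soloMechanism_topLottery {N : Type*} [DecidableEq N] [Nonempty M] [NeZero m]
    {q : M → ℕ} {i₀ : N} {ρ : ℝ} (ho : ∀ k, (P (o k) : ℕ) = k) (hr0 : 0 < r) (hr : r ≤ 1 / 4)
    (hρ : 8 * r ^ 2 ≤ ρ) :
    ¬ PSP (soloMechanism q i₀ fun P : M ≃ Fin m => topLottery o r (P.symm 0)) ρ := by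
  intro hpsp
  have hs0 : 0 < 8 * r ^ 2 := by positivity
  have hs1 : 8 * r ^ 2 < 1 := by nlinarith
  have hP : P.symm 0 = o 0 := P.symm_apply_eq.2 (Fin.ext (ho 0).symm)
  obtain ⟨P', hP'⟩ := exists_symm_zero_eq P (o 2)
  have hle := hpsp.dotProduct_le_of_soloMechanism P P' (fun j => by positivity)
    (consistent_pow_rank hs0 hs1 P) ((urbi_pow_rank hs0 hs1 P).mono hρ)
  rw [hP, hP'] at hle
  exact hle.not_gt (dotProduct_topLottery_pow_rank_lt ho hr0 hr)

end Tightness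

/-- **Theorem 2 (Tightness).**
Given a setting `(N, M, q)` with `m ≥ 4` objects, for every `ε > 0` there exist a
bound `r ∈ (0,1)` and a mechanism `φ` such that `φ` is `r`-locally partially
strategyproof but not `r^(2-ε)`-partially strategyproof. -/
theorem tightness
    {N M : Type*} [Fintype N] [DecidableEq N] [Nonempty N]
    [Fintype M] [DecidableEq M] [Nonempty M]
    {m : ℕ} (hm : Fintype.card M = m) (hm4 : 4 ≤ m)
    (q : M → ℕ) (hq : ∀ j, 1 ≤ q j) (hcap : Fintype.card N ≤ ∑ j, q j)
    (ε : ℝ) (hε : 0 < ε) :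
    ∃ r ∈ Set.Ioo (0 : ℝ) 1, ∃ φ : (N → M ≃ Fin m) → N → M → ℝ,
      Feasible q φ ∧ LocalPSP φ r ∧ ¬ PSP φ (r ^ ((2 : ℝ) - ε)) := by
  have : NeZero m := ⟨by omega⟩
  let e : M ≃ Fin m := Fintype.equivFinOfCardEq hm
  let o : Fin 4 ↪ M := (Fin.castLEEmb hm4).trans e.symm.toEmbedding
  have ho (k : Fin 4) : (e (o k) : ℕ) = k := by simp [o]
  have : Nontrivial M := o.injective.nontrivial
  obtain ⟨r, hrε, hr0, hr4⟩ : ∃ r : ℝ, 8 * r ^ (2 : ℝ) ≤ r ^ (2 - ε) ∧ 0 < r ∧ r ≤ 1 / 4 :=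
    ((eventually_const_mul_rpow_le_rpow_sub hε 8 2).and (Ioc_mem_nhdsGT (by norm_num))).exists
  rw [Real.rpow_two] at hrε
  refine ⟨r, ⟨hr0, by linarith⟩,
    soloMechanism q (Classical.arbitrary N) fun P => topLottery o r (P.symm 0), ?_, ?_, ?_⟩
  · exact feasible_soloMechanism (fun _ => topLottery_mem_stdSimplex hr0.le hr4 _) hq hcap
  · exact localPSP_soloMechanism fun _ _ hP _ =>
      dotProduct_topLottery_symm_zero_le o hr0.le hr4 hP
  · exact not_psp_soloMechanism_topLottery ho hr0 hr4 hrε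
end

section
/- Let M be a finite set, r ∈ (0,1), and u, v : M → ℝ≥0 with min_{j∈M} u(j) = min_{j∈M} v(j) = 0, attained at a common object j₀ (i.e., u(j₀) = v(j₀) = 0). Let a,b ∈ M \ {j₀} with u(a) > u(b) > 0, v(b) > v(a) > 0, u(b) − min_j u(j) ≤ r·(u(a) − min_j u(j)), and v(a) − min_j v(j) ≤ r·(v(b) − min_j v(j)). Write u_α = (1−α)u + αv, let α(a,b,1) be the unique α ∈ (0,1) with u_α(a) = u_α(b), let \underline{α}(a,b,r) = inf{α ∈ [0,1] : (u_α(b) − min_{j∈M} u_α(j))/(u_α(a) − min_{j∈M} u_α(j)) > r}, and let \overline{α}(b,a,r) = sup{α ∈ [0,1] : (u_α(a) − min_{j∈M} u_α(j))/(u_α(b) − min_{j∈M} u_α(j)) > r}. Then \underline{α}(a,b,r) < α(a,b,1) < \overline{α}(b,a,r). -/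
open Finset

/-- The convex combination `u_α = (1-α)·u + α·v`. -/
def mix {M : Type*} (u v : M → ℝ) (α : ℝ) : M → ℝ := fun j => (1 - α) * u j + α * v j

/-- The transition time `α(a,b,1)`: the unique parameter at which
`u_α(a) = u_α(b)` (for `u(a) > u(b)`, `v(a) < v(b)`). -/
noncomputable def transTime {M : Type*} (u v : M → ℝ) (a b : M) : ℝ :=
  (u a - u b) / (u a - u b + v b - v a)

/-- `\underline{α}(a,b,r)`: the first time at which `u_α` violates the `URBI(r)`
constraint for `a ≻ b`. -/
noncomputable def firstViol {M : Type*} [Fintype M] [Nonempty M]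
    (u v : M → ℝ) (r : ℝ) (a b : M) : ℝ :=
  sInf {α : ℝ | α ∈ Set.Icc (0 : ℝ) 1 ∧
    r < (mix u v α b - minU (mix u v α)) / (mix u v α a - minU (mix u v α))}

/-- `\overline{α}(b,a,r)`: the last time at which `u_α` violates the `URBI(r)`
constraint for `b ≻ a` (the ratio of `a`'s to `b`'s normalized utility exceeds `r`). -/
noncomputable def lastViol {M : Type*} [Fintype M] [Nonempty M]
    (u v : M → ℝ) (r : ℝ) (a b : M) : ℝ :=
  sSup {α : ℝ | α ∈ Set.Icc (0 : ℝ) 1 ∧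
    r < (mix u v α a - minU (mix u v α)) / (mix u v α b - minU (mix u v α))}

/-!
At the transition time `t` the objects `a` and `b` have the same utility, so as long as this utility
is not minimal, both normalized ratios equal `1 > r`. The ratio is a continuous function of the
utility, hence it exceeds `r` for all `α` close to `t`, on either side: the URBI constraints are
already violated before `t` and still violated after it.
-/

open Filter Topology

section Order

variable {X : Type*} [ConditionallyCompleteLinearOrder X] [TopologicalSpace X] [OrderTopology X]
  [DenselyOrdered X] {x y t : X} {p : X → Prop}

lemma sInf_Icc_sep_lt_of_eventually (ht : t ∈ Set.Ioc x y) (hp : ∀ᶠ s in 𝓝[<] t, p s) :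
    sInf {s | s ∈ Set.Icc x y ∧ p s} < t := by
  have : (𝓝[<] t).NeBot := nhdsLT_neBot_of_exists_lt ⟨x, ht.1⟩
  obtain ⟨s, hps, hxs, hst⟩ := (hp.and (Ioo_mem_nhdsLT ht.1)).exists
  exact csInf_lt_of_lt ⟨x, fun _ h => h.1.1⟩ ⟨⟨hxs.le, hst.le.trans ht.2⟩, hps⟩ hst

lemma lt_sSup_Icc_sep_of_eventually (ht : t ∈ Set.Ico x y) (hp : ∀ᶠ s in 𝓝[>] t, p s) :
    t < sSup {s | s ∈ Set.Icc x y ∧ p s} := by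
  have : (𝓝[>] t).NeBot := nhdsGT_neBot_of_exists_gt ⟨y, ht.2⟩
  obtain ⟨s, hps, hts, hsy⟩ := (hp.and (Ioo_mem_nhdsGT ht.2)).exists
  exact lt_csSup_of_lt ⟨y, fun _ h => h.1.2⟩ ⟨⟨ht.1.trans hts.le, hsy.le⟩, hps⟩ hts

end Order

section Mix

variable {M : Type*} {u v : M → ℝ} {a b : M}

lemma continuous_mix : Continuous (mix u v) := by
  unfold mix
  fun_prop

lemma mix_lt_mix {α : ℝ} (hα : α ∈ Set.Icc (0 : ℝ) 1) (hu : u a < u b) (hv : v a < v b) :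
    mix u v α a < mix u v α b := by
  have hgap : 0 < (1 - α) * (u b - u a) + α * (v b - v a) :=
    convex_Ioi (0 : ℝ) (sub_pos.2 hu) (sub_pos.2 hv) (sub_nonneg.2 hα.2) hα.1 (by ring)
  simp only [mix]
  linarith

lemma transTime_mem_Ioo (hu : u b < u a) (hv : v a < v b) :
    transTime u v a b ∈ Set.Ioo (0 : ℝ) 1 := by
  have hpos : 0 < u a - u b + v b - v a := by linarith
  exact ⟨div_pos (sub_pos.2 hu) hpos, (div_lt_one hpos).2 (by linarith)⟩

lemma mix_transTime_eq (h : u a - u b + v b - v a ≠ 0) :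
    mix u v (transTime u v a b) a = mix u v (transTime u v a b) b := by
  have htime : transTime u v a b * (u a - u b + v b - v a) = u a - u b := div_mul_cancel₀ _ h
  simp only [mix]
  linarith

end Mix

section Violation

variable {M : Type*} [Fintype M] [Nonempty M] {u v : M → ℝ} {a b : M} {r t : ℝ}

lemma continuous_minU : Continuous (minU : (M → ℝ) → ℝ) :=
  Continuous.finset_inf'_apply _ fun j _ => continuous_apply j

lemma minU_lt_of_lt {j : M} {c : ℝ} (h : u j < c) : minU u < c :=
  (Finset.inf'_le u (Finset.mem_univ j)).trans_lt h

lemma eventually_lt_sub_minU_div_sub_minU (hr : r < 1) (hab : u a = u b) (hmin : minU u < u a) :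
    ∀ᶠ w in 𝓝 u, r < (w b - minU w) / (w a - minU w) := by
  have hden : u a - minU u ≠ 0 := (sub_pos.2 hmin).ne'
  have hcont : ContinuousAt (fun w : M → ℝ => (w b - minU w) / (w a - minU w)) u :=
    ((continuous_apply b).sub continuous_minU).continuousAt.div
      ((continuous_apply a).sub continuous_minU).continuousAt hden
  have hone : (u b - minU u) / (u a - minU u) = 1 := by rw [← hab, div_self hden]
  exact hcont.eventually_const_lt (hr.trans_eq hone.symm)

lemma firstViol_lt_of_mix_eq (hr : r < 1) (ht : t ∈ Set.Ioc (0 : ℝ) 1)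
    (hab : mix u v t a = mix u v t b) (hmin : minU (mix u v t) < mix u v t a) :
    firstViol u v r a b < t :=
  sInf_Icc_sep_lt_of_eventually ht <| nhdsWithin_le_nhds <|
    continuous_mix.continuousAt.eventually (eventually_lt_sub_minU_div_sub_minU hr hab hmin)

lemma lt_lastViol_of_mix_eq (hr : r < 1) (ht : t ∈ Set.Ico (0 : ℝ) 1)
    (hab : mix u v t a = mix u v t b) (hmin : minU (mix u v t) < mix u v t a) :
    t < lastViol u v r a b :=
  lt_sSup_Icc_sep_of_eventually ht <| nhdsWithin_le_nhds <|
    continuous_mix.continuousAt.eventually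
      (eventually_lt_sub_minU_div_sub_minU hr hab.symm (hab ▸ hmin))

theorem viol_times_ordering_general (hr : r < 1) (hu : u b < u a) (hv : v a < v b)
    (hmin : minU (mix u v (transTime u v a b)) < mix u v (transTime u v a b) a) :
    firstViol u v r a b < transTime u v a b ∧ transTime u v a b < lastViol u v r a b := by
  have ht := transTime_mem_Ioo hu hv
  have hab : mix u v (transTime u v a b) a = mix u v (transTime u v a b) b :=
    mix_transTime_eq (by linarith)
  exact ⟨firstViol_lt_of_mix_eq hr (Set.Ioo_subset_Ioc_self ht) hab hmin,
    lt_lastViol_of_mix_eq hr (Set.Ioo_subset_Ico_self ht) hab hmin⟩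

end Violation

/-- **Ordering of violation times around a transition.**
If `u` and `v` have minimum `0` attained at a common object `j₀`, `u(a) > u(b) > 0`,
`v(b) > v(a) > 0`, and the respective `URBI(r)`-type constraints hold for `u` (for
`a ≻ b`) and for `v` (for `b ≻ a`), then
`\underline{α}(a,b,r) < α(a,b,1) < \overline{α}(b,a,r)`. -/
theorem viol_times_ordering
    {M : Type*} [Fintype M] [DecidableEq M] [Nonempty M]
    (r : ℝ) (hr : r ∈ Set.Ioo (0 : ℝ) 1)
    (u v : M → ℝ) (hu0 : ∀ j, 0 ≤ u j) (hv0 : ∀ j, 0 ≤ v j)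
    (j₀ : M) (hju : u j₀ = 0) (hjv : v j₀ = 0)
    (humin : minU u = 0) (hvmin : minU v = 0)
    (a b : M) (ha : a ≠ j₀) (hb : b ≠ j₀)
    (hub : 0 < u b) (huab : u b < u a) (hva : 0 < v a) (hvab : v a < v b)
    (huU : u b - minU u ≤ r * (u a - minU u))
    (hvU : v a - minU v ≤ r * (v b - minU v)) :
    firstViol u v r a b < transTime u v a b ∧
      transTime u v a b < lastViol u v r a b := by
  have ht := Set.Ioo_subset_Icc_self (transTime_mem_Ioo huab hvab)
  exact viol_times_ordering_general hr.2 huab hvab <|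
    minU_lt_of_lt (mix_lt_mix ht (hju.trans_lt (hub.trans huab)) (hjv.trans_lt hva))
end
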